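/- arXiv:2404.14466 — 4 statements merged into one kernel-verified Lean document; each statement's English description precedes it below -/
import Mathlib

section
/- Let k > 1 be an integer such that k+2 is prime, and set N := k+2. Then the real numbers d_m := sin(mπ/N)/sin(π/N) for m = 1, 2, …, (k+1)/2 are linearly independent over ℚ. -/
open Real

lemma aux_term (k m : ℕ) (hm : m ≤ k) (z : ℂ)
    (hz : z = Complex.exp (2 * Real.pi * Complex.I / ((2 * (k + 2) : ℕ) : ℂ))) :
    z * (z ^ m + z ^ (k - m)) =
      2 * Complex.I * (Real.sin (((m : ℕ) + 1) * Real.pi / (k + 2)) : ℂ) := by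
  have hk : (k : ℂ) + 2 ≠ 0 := by exact_mod_cast (by omega : k + 2 ≠ 0)
  have h1 : z * z ^ m = Complex.exp ((((m : ℂ) + 1) * Real.pi / (k + 2)) * Complex.I) := by
    rw [← pow_succ', hz, ← Complex.exp_nat_mul]
    congr 1; push_cast; field_simp
  have h2 : z * z ^ (k - m) =
      Complex.exp (Real.pi * Complex.I + -((((m : ℂ) + 1) * Real.pi / (k + 2))) * Complex.I) := by
    rw [← pow_succ', hz, ← Complex.exp_nat_mul]
    congr 1; push_cast [Nat.cast_sub hm]; field_simp; ring
  rw [mul_add, h1, h2, Complex.exp_add, Complex.exp_pi_mul_I, Complex.ofReal_sin, Complex.sin]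
  push_cast
  linear_combination (-Complex.exp (-(((m : ℂ) + 1) * Real.pi / (k + 2)) * Complex.I) + Complex.exp ((((m : ℂ) + 1) * Real.pi / (k + 2)) * Complex.I)) * Complex.I_sq

/-- For `k > 1` with `k + 2` prime, the real numbers
`d_m = sin(mπ/(k+2)) / sin(π/(k+2))` for `m = 1, …, (k+1)/2` are
linearly independent over `ℚ`. -/
theorem psu2_dimensions_rationally_independent (k : ℕ) (hk : 1 < k)
    (hp : Nat.Prime (k + 2)) :
    LinearIndependent ℚ (fun m : Fin ((k + 1) / 2) =>
      Real.sin (((m : ℕ) + 1) * Real.pi / (k + 2)) / Real.sin (Real.pi / (k + 2))) := by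
  rw [Fintype.linearIndependent_iff]
  intro c hc
  have hs : Real.sin (Real.pi / (k + 2)) ≠ 0 := by
    apply ne_of_gt
    apply Real.sin_pos_of_pos_of_lt_pi (by positivity)
    apply div_lt_self Real.pi_pos
    have : (0 : ℝ) ≤ k := by positivity
    linarith
  have hc' : ∑ m : Fin ((k + 1) / 2), (c m : ℝ) * Real.sin (((m : ℕ) + 1) * Real.pi / (k + 2)) = 0 := by
    have := congrArg (· * Real.sin (Real.pi / (k + 2))) hc
    simp only [Finset.sum_mul, zero_mul, Rat.smul_def] at this
    rw [← this]
    refine Finset.sum_congr rfl fun m _ => ?_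
    field_simp
  obtain ⟨z, hz⟩ : ∃ z, z = Complex.exp (2 * Real.pi * Complex.I / ((2 * (k + 2) : ℕ) : ℂ)) := ⟨_, rfl⟩
  have hz0 : z ≠ 0 := hz ▸ Complex.exp_ne_zero _
  have hprim : IsPrimitiveRoot z (2 * (k + 2)) := hz ▸ Complex.isPrimitiveRoot_exp _ (by omega)
  let Q : Polynomial ℚ := ∑ m : Fin ((k + 1) / 2),
    Polynomial.C (c m) * (Polynomial.X ^ (m : ℕ) + Polynomial.X ^ (k - (m : ℕ)))
  have hQz : Polynomial.aeval z Q = 0 := by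
    apply mul_left_cancel₀ hz0
    simp only [Q, map_sum, map_mul, map_add, map_pow, Polynomial.aeval_X, Polynomial.aeval_C,
      Finset.mul_sum, mul_zero]
    have h := congrArg (fun x : ℝ => 2 * Complex.I * (x : ℂ)) hc'
    simp only [Complex.ofReal_sum, Finset.mul_sum, Complex.ofReal_zero, mul_zero] at h
    rw [← h]
    refine Finset.sum_congr rfl fun m _ => ?_
    have := aux_term k m (by omega) z hz
    simp only [eq_ratCast, Complex.ofReal_mul, Complex.ofReal_ratCast]
    linear_combination (c m : ℂ) * this
  have hdeg : Q.natDegree ≤ k := by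
    apply Polynomial.natDegree_sum_le_of_forall_le
    intro m _
    refine (Polynomial.natDegree_C_mul_le _ _).trans ?_
    refine (Polynomial.natDegree_add_le _ _).trans ?_
    simp only [Polynomial.natDegree_X_pow]
    omega
  have hodd : Nat.Coprime 2 (k + 2) := by
    rw [Nat.coprime_primes Nat.prime_two hp]; omega
  have hmin : (minpoly ℚ z).natDegree = k + 1 := by
    rw [← Polynomial.cyclotomic_eq_minpoly_rat hprim (by omega), Polynomial.natDegree_cyclotomic,
      Nat.totient_mul hodd, Nat.totient_prime hp]
    simp
  have hQ : Q = 0 := by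
    by_contra hne
    have := Polynomial.natDegree_le_of_dvd (minpoly.dvd ℚ z hQz) hne
    omega
  intro i
  have hco := congrArg (fun P => Polynomial.coeff P (i : ℕ)) hQ
  simp only [Q, Polynomial.finset_sum_coeff, Polynomial.coeff_C_mul, Polynomial.coeff_add,
    Polynomial.coeff_X_pow, Polynomial.coeff_zero] at hco
  rw [Finset.sum_eq_single i] at hco
  · rw [if_pos rfl, if_neg (by omega)] at hco
    simpa using hco
  · intro b _ hb
    have : (i : ℕ) ≠ b := fun h => hb (Fin.ext h.symm)
    rw [if_neg this, if_neg (by omega)]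
    simp
  · simp
end

section
/- Let α := (3 + √5 + √(6(5+√5)))/4. Then α is a root of the polynomial p_α(x) = x⁴ − 3x³ − x² + 3x + 1, and p_α is the minimal polynomial of α over ℚ (in particular p_α is irreducible over ℚ and α has degree 4 over ℚ). -/
open Polynomial

theorem aux_q_irr : Irreducible (X ^ 4 + 5 * X ^ 3 + 5 * X ^ 2 - 5 * X - 5 : ℤ[X]) := by
  have e : (X ^ 4 + 5 * X ^ 3 + 5 * X ^ 2 - 5 * X - 5 : ℤ[X])
      = X ^ 4 + C 5 * X ^ 3 + C 5 * X ^ 2 - C 5 * X - C 5 := by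
    simp only [map_ofNat]
  rw [e]
  have hd : (X ^ 4 + C 5 * X ^ 3 + C 5 * X ^ 2 - C 5 * X - C 5 : ℤ[X]).natDegree = 4 := by
    compute_degree!
  have hm : (X ^ 4 + C 5 * X ^ 3 + C 5 * X ^ 2 - C 5 * X - C 5 : ℤ[X]).Monic := by
    monicity!
  have h5 : (Ideal.span {(5 : ℤ)}).IsPrime := by
    rw [Ideal.span_singleton_prime (by norm_num)]
    norm_num
  refine IsEisensteinAt.irreducible (𝓟 := Ideal.span {(5 : ℤ)}) ⟨?_, ?_, ?_⟩ h5 hm.isPrimitive (by omega)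
  · rw [hm.leadingCoeff, Ideal.mem_span_singleton]; norm_num
  · intro n hn
    rw [hd] at hn
    rw [Ideal.mem_span_singleton]
    interval_cases n <;> simp [coeff_X, coeff_X_pow]
  · rw [Ideal.span_singleton_pow, Ideal.mem_span_singleton]
    simp [coeff_X, coeff_X_pow]

theorem aux_p_irr : Irreducible (X ^ 4 - 3 * X ^ 3 - X ^ 2 + 3 * X + 1 : ℚ[X]) := by
  have hm : (X ^ 4 + 5 * X ^ 3 + 5 * X ^ 2 - 5 * X - 5 : ℤ[X]).Monic := by
    monicity!
  have h := (hm.irreducible_iff_irreducible_map_fraction_map (K := ℚ)).1 aux_q_irr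
  rw [← MulEquiv.irreducible_iff (taylorEquiv (2 : ℚ))]
  convert h using 1
  have hX : taylorEquiv (2 : ℚ) X = X + 2 := by
    change taylor (2 : ℚ) X = X + 2
    rw [taylor_X, map_ofNat]
  simp only [map_add, map_sub, map_mul, map_pow, map_one, map_ofNat, hX, Polynomial.map_add,
    Polynomial.map_sub, Polynomial.map_mul, Polynomial.map_pow, Polynomial.map_X,
    Polynomial.map_ofNat]
  ring

/-- `α = (3 + √5 + √(6(5+√5)))/4` is a root of
`p_α(x) = x⁴ − 3x³ − x² + 3x + 1`, and `p_α` is the minimal polynomial of `α`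
over `ℚ` (in particular `p_α` is irreducible over `ℚ`). -/
theorem minpoly_alpha_E8 (α : ℝ)
    (hα : α = (3 + Real.sqrt 5 + Real.sqrt (6 * (5 + Real.sqrt 5))) / 4)
    (p : Polynomial ℚ) (hp : p = X ^ 4 - 3 * X ^ 3 - X ^ 2 + 3 * X + 1) :
    Polynomial.aeval α p = 0 ∧ minpoly ℚ α = p ∧ Irreducible p := by
  have hi : Irreducible p := hp ▸ aux_p_irr
  have hm : p.Monic := by rw [hp]; monicity!
  have h0 : Polynomial.aeval α p = 0 := by
    have h1 : Real.sqrt 5 ^ 2 = 5 := Real.sq_sqrt (by norm_num)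
    have h2 : Real.sqrt (6 * (5 + Real.sqrt 5)) ^ 2 = 6 * (5 + Real.sqrt 5) :=
      Real.sq_sqrt (by positivity)
    rw [hp]
    simp only [map_add, map_sub, map_mul, map_pow, aeval_X, map_ofNat, map_one]
    rw [hα]
    generalize Real.sqrt (6 * (5 + Real.sqrt 5)) = t at *
    generalize Real.sqrt 5 = s at *
    grind
  exact ⟨h0, (minpoly.eq_of_irreducible_of_monic hi h0 hm).symm, hi⟩
end

section
/- Let φ := (1+√5)/2, α := (3 + √5 + √(6(5+√5)))/4 and β := (2 + √5 + √(3(5+2√5)))/2. Then the set {1, α, φ} is linearly independent over ℚ, and the set {1, β, φ} is linearly independent over ℚ. -/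
lemma s5_indep (p q : ℚ) (h : (p : ℝ) + q * Real.sqrt 5 = 0) : p = 0 ∧ q = 0 := by
  have hirr : Irrational (Real.sqrt 5) := by
    simpa using Nat.Prime.irrational_sqrt (p := 5) (by norm_num)
  have hq : q = 0 := by
    by_contra hq
    apply hirr
    have hq' : (q : ℝ) ≠ 0 := by exact_mod_cast hq
    refine ⟨-p / q, ?_⟩
    push_cast
    rw [div_eq_iff hq']
    linarith
  subst hq
  refine ⟨?_, rfl⟩
  simpa using h

lemma no_rat_sq_five (w : ℚ) : w ^ 2 ≠ 5 := by
  intro h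
  have h1 : ((w : ℝ)) ^ 2 = 5 := by exact_mod_cast h
  have hs : Real.sqrt 5 ^ 2 = 5 := Real.sq_sqrt (by norm_num)
  rcases sq_eq_sq_iff_eq_or_eq_neg.mp (h1.trans hs.symm) with h2 | h2
  · exact absurd (s5_indep w (-1) (by push_cast; linarith)).2 (by norm_num)
  · exact absurd (s5_indep w 1 (by push_cast; linarith)).2 (by norm_num)

lemma three_indep (a b c : ℚ) (hc : c ≠ 0) (hn : a ^ 2 - 5 * b ^ 2 = 5 * c ^ 2) (r : ℝ)
    (hr : r ^ 2 = a + b * Real.sqrt 5) (x y z : ℚ)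
    (h : (x : ℝ) + y * Real.sqrt 5 + z * r = 0) : x = 0 ∧ y = 0 ∧ z = 0 := by
  have hs : Real.sqrt 5 ^ 2 = 5 := Real.sq_sqrt (by norm_num)
  have hz : z = 0 := by
    by_contra hz
    have h1 := s5_indep (x ^ 2 + 5 * y ^ 2 - z ^ 2 * a) (2 * x * y - z ^ 2 * b) (by
      push_cast
      linear_combination (x + y * Real.sqrt 5 - z * r) * h - (y : ℝ) ^ 2 * hs + (z : ℝ) ^ 2 * hr)
    obtain ⟨e1, e2⟩ := h1
    apply no_rat_sq_five ((x ^ 2 - 5 * y ^ 2) / (z ^ 2 * c))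
    rw [div_pow, div_eq_iff (by positivity)]
    linear_combination (x ^ 2 + 5 * y ^ 2 + z ^ 2 * a) * e1
      - 5 * (2 * x * y + z ^ 2 * b) * e2 + z ^ 4 * hn
  subst hz
  have := s5_indep x y (by simpa using h)
  exact ⟨this.1, this.2, rfl⟩


/-- With `φ = (1+√5)/2`, `α = (3 + √5 + √(6(5+√5)))/4` and
`β = (2 + √5 + √(3(5+2√5)))/2`, the sets `{1, α, φ}` and `{1, β, φ}` are each
linearly independent over `ℚ`. -/
theorem E8_dimensions_rationally_independent
    (φ α β : ℝ)
    (hφ : φ = (1 + Real.sqrt 5) / 2)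
    (hα : α = (3 + Real.sqrt 5 + Real.sqrt (6 * (5 + Real.sqrt 5))) / 4)
    (hβ : β = (2 + Real.sqrt 5 + Real.sqrt (3 * (5 + 2 * Real.sqrt 5))) / 2) :
    LinearIndependent ℚ ![(1 : ℝ), α, φ] ∧ LinearIndependent ℚ ![(1 : ℝ), β, φ] := by
  have h5 : 0 ≤ Real.sqrt 5 := Real.sqrt_nonneg 5
  have hr1 : Real.sqrt (6 * (5 + Real.sqrt 5)) ^ 2 = ((30 : ℚ) : ℝ) + ((6 : ℚ) : ℝ) * Real.sqrt 5 := by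
    rw [Real.sq_sqrt (by positivity)]; push_cast; ring
  have hr2 : Real.sqrt (3 * (5 + 2 * Real.sqrt 5)) ^ 2
      = ((15 : ℚ) : ℝ) + ((6 : ℚ) : ℝ) * Real.sqrt 5 := by
    rw [Real.sq_sqrt (by positivity)]; push_cast; ring
  constructor
  · rw [Fintype.linearIndependent_iff]
    intro g hg
    simp only [Fin.sum_univ_three, Rat.smul_def, Matrix.cons_val] at hg
    rw [hα, hφ] at hg
    obtain ⟨e0, e1, e2⟩ := three_indep 30 6 12 (by norm_num) (by norm_num) _ hr1
      (g 0 + 3 / 4 * g 1 + g 2 / 2) (g 1 / 4 + g 2 / 2) (g 1 / 4)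
      (by push_cast; linear_combination hg)
    intro i
    fin_cases i <;> simp only [Fin.mk_one, Fin.zero_eta, Fin.reduceFinMk] <;> linarith
  · rw [Fintype.linearIndependent_iff]
    intro g hg
    simp only [Fin.sum_univ_three, Rat.smul_def, Matrix.cons_val] at hg
    rw [hβ, hφ] at hg
    obtain ⟨e0, e1, e2⟩ := three_indep 15 6 3 (by norm_num) (by norm_num) _ hr2
      (g 0 + g 1 + g 2 / 2) (g 1 / 2 + g 2 / 2) (g 1 / 2)
      (by push_cast; linear_combination hg)
    intro i
    fin_cases i <;> simp only [Fin.mk_one, Fin.zero_eta, Fin.reduceFinMk] <;> linarith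
end

section
/- Let N := 17 and d_m := sin(mπ/17)/sin(π/17) for integers m. Let Θ be the 4×4 real skew-symmetric matrix with rows (0, d₂, d₈, d₁₄), (−d₂, 0, d₆, d₁₀), (−d₈, −d₆, 0, d₄), (−d₁₄, −d₁₀, −d₄, 0). Then Θ is non-degenerate: for every x ∈ ℚ⁴, if ⟨x, Θy⟩ ∈ ℚ for all y ∈ ℚ⁴, then x = 0. -/
lemma sin_zeta_aux (ζ : ℂ) (hζ : ζ = Complex.exp (2 * Real.pi * Complex.I / (17 : ℕ)))
    (h17 : ζ ^ 17 = 1) (k l m : ℕ) (hk : k + l = 17) (hm : m = 2 * k) :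
    ζ ^ k - ζ ^ l = 2 * Complex.I * ((Real.sin (m * Real.pi / 17) : ℝ) : ℂ) := by
  have h0 : ζ ≠ 0 := by rw [hζ]; exact Complex.exp_ne_zero _
  have hl : ζ ^ l = (ζ ^ k)⁻¹ := by
    apply eq_inv_of_mul_eq_one_left
    rw [← pow_add, add_comm, hk, h17]
  have hk' : ζ ^ k = Complex.exp (((m * Real.pi / 17 : ℝ) : ℂ) * Complex.I) := by
    rw [hζ, ← Complex.exp_nat_mul]
    congr 1
    subst hm
    push_cast
    ring
  rw [hl, hk', ← Complex.exp_neg, Complex.ofReal_sin, Complex.sin, neg_mul]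
  linear_combination
    (Complex.exp (-(((m * Real.pi / 17 : ℝ) : ℂ) * Complex.I))
      - Complex.exp (((m * Real.pi / 17 : ℝ) : ℂ) * Complex.I)) * (-Complex.I_sq)

lemma sin_indep_aux (a b c e : ℚ)
    (h : (a : ℝ) * Real.sin (Real.pi / 17) + b * Real.sin ((2 : ℕ) * Real.pi / 17)
      + c * Real.sin ((8 : ℕ) * Real.pi / 17) + e * Real.sin ((14 : ℕ) * Real.pi / 17) = 0) :
    b = 0 ∧ c = 0 ∧ e = 0 := by
  have hp : Fact (Nat.Prime 17) := ⟨by norm_num⟩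
  obtain ⟨ζ, hζ⟩ : ∃ ζ : ℂ, ζ = Complex.exp (2 * Real.pi * Complex.I / (17 : ℕ)) := ⟨_, rfl⟩
  have hprim : IsPrimitiveRoot ζ 17 := by
    rw [hζ]; exact Complex.isPrimitiveRoot_exp 17 (by norm_num)
  have h1 : Real.sin (Real.pi / 17) = Real.sin ((16 : ℕ) * Real.pi / 17) := by
    rw [← Real.sin_pi_sub]; congr 1; push_cast; ring
  rw [h1] at h
  have hc := congrArg (fun r : ℝ => (r : ℂ)) h
  simp only [Complex.ofReal_add, Complex.ofReal_mul, Complex.ofReal_ratCast,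
    Complex.ofReal_zero] at hc
  have e1 := sin_zeta_aux ζ hζ hprim.pow_eq_one 8 9 16 rfl rfl
  have e2 := sin_zeta_aux ζ hζ hprim.pow_eq_one 1 16 2 rfl rfl
  have e3 := sin_zeta_aux ζ hζ hprim.pow_eq_one 4 13 8 rfl rfl
  have e4 := sin_zeta_aux ζ hζ hprim.pow_eq_one 7 10 14 rfl rfl
  have key : (a : ℂ) * (ζ ^ 8 - ζ ^ 9) + b * (ζ ^ 1 - ζ ^ 16) + c * (ζ ^ 4 - ζ ^ 13)
      + e * (ζ ^ 7 - ζ ^ 10) = 0 := by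
    rw [e1, e2, e3, e4]
    linear_combination 2 * Complex.I * hc
  have hall := (IsPrimitiveRoot.sum_eq_zero_iff_forall_eq (by norm_num) hprim
    ![0, b, 0, 0, c, 0, 0, e, a, -a, -e, 0, 0, -c, 0, 0, -b]).1 (by
      simp [Fin.sum_univ_succ]
      linear_combination key)
  exact ⟨hall 1 0, hall 4 0, hall 7 0⟩

/-- With `d m = sin(mπ/17)/sin(π/17)`, the 4×4 skew-symmetric
matrix with rows `(0, d₂, d₈, d₁₄)`, `(−d₂, 0, d₆, d₁₀)`, `(−d₈, −d₆, 0, d₄)`,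
`(−d₁₄, −d₁₀, −d₄, 0)` is non-degenerate: any `x ∈ ℚ⁴` with `⟨x, Θy⟩ ∈ ℚ` for
all `y ∈ ℚ⁴` must be `0`. -/
theorem theta_PSU2_15_nondegenerate
    (d : ℕ → ℝ)
    (hd : ∀ m : ℕ, d m = Real.sin (m * Real.pi / 17) / Real.sin (Real.pi / 17))
    (Θ : Matrix (Fin 4) (Fin 4) ℝ)
    (hΘ : Θ = !![0, d 2, d 8, d 14;
                 -d 2, 0, d 6, d 10;
                 -d 8, -d 6, 0, d 4;
                 -d 14, -d 10, -d 4, 0]) :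
    ∀ x : Fin 4 → ℚ,
      (∀ y : Fin 4 → ℚ, ∃ q : ℚ,
        ∑ i, (x i : ℝ) * Θ.mulVec (fun j => (y j : ℝ)) i = (q : ℝ)) → x = 0 := by
  intro x hx
  have hs : Real.sin (Real.pi / 17) ≠ 0 := by
    apply ne_of_gt
    apply Real.sin_pos_of_pos_of_lt_pi <;> linarith [Real.pi_pos]
  obtain ⟨q, hq⟩ := hx ![1, 0, 0, 0]
  obtain ⟨r, hr⟩ := hx ![0, 1, 0, 0]
  subst hΘ
  simp [Matrix.mulVec, dotProduct, Fin.sum_univ_four, hd] at hq hr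
  field_simp at hq hr
  obtain ⟨h1, h2, h3⟩ := sin_indep_aux q (x 1) (x 2) (x 3) (by
    push_cast
    rw [mul_comm 8 Real.pi, mul_comm 14 Real.pi]
    linear_combination (-1) * hq)
  simp [h2, h3] at hr
  obtain ⟨h0, -, -⟩ := sin_indep_aux (-r) (x 0) 0 0 (by
    push_cast; linear_combination hr)
  ext i
  fin_cases i <;> simp [h0, h1, h2, h3]
end
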